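/- For every N ∈ ℕ, the characteristic polynomial of the Sylvester–Kac matrix K_{2N+2} (of size (2N+3)×(2N+3)) is the product of the characteristic polynomials of G_N and S_{N+1}: det(x·I_{2N+3} − K_{2N+2}) = det(x·I_{N+1} − G_N) · det(x·I_{N+2} − S_{N+1}) as polynomials in x. -/

import Mathlib

open Matrix Polynomial

/-- The Sylvester–Kac matrix `K_M` over `ℚ`. -/
def Kmat (M : ℕ) : Matrix (Fin (M+1)) (Fin (M+1)) ℚ :=
  Matrix.of fun k l =>
    if (l : ℕ) = (k : ℕ) + 1 then ((k : ℕ) + 1 : ℚ)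
    else if (l : ℕ) + 1 = (k : ℕ) then ((M - (k : ℕ) + 1 : ℕ) : ℚ)
    else 0

/-- The matrix `G_N`, over `ℚ`. -/
def Gmat (N : ℕ) : Matrix (Fin (N+1)) (Fin (N+1)) ℚ :=
  Matrix.of fun k l =>
    if (l : ℕ) = (k : ℕ) + 1 then ((k : ℕ) + 1 : ℚ)
    else if (l : ℕ) + 1 = (k : ℕ) then ((2 * N + 3 - (k : ℕ) : ℕ) : ℚ)
    else 0

/-- The matrix `S_N`, over `ℚ`. -/
def Smat (N : ℕ) : Matrix (Fin (N+1)) (Fin (N+1)) ℚ :=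
  Matrix.of fun k l =>
    if (l : ℕ) = (k : ℕ) + 1 then
      (if (k : ℕ) = N - 1 then (2 * N : ℚ) else ((k : ℕ) + 1 : ℚ))
    else if (l : ℕ) + 1 = (k : ℕ) then ((2 * N + 1 - (k : ℕ) : ℕ) : ℚ)
    else 0

/-!
The matrix `K_{2N+2}` is invariant under the reversal `k ↦ 2N + 2 - k` of its indices, so it
preserves the antisymmetric vectors, and its characteristic polynomial is the product of those of
its restriction to them and of the map induced on the quotient, where each index is identified with
its mirror image. Because `K_{2N+2}` is tridiagonal, the indices on either side of the fixed point
`N + 1` do not interact, so the restriction is the leading block `G_N`. In the quotient the two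
neighbours `N` and `N + 2` of the fixed point are identified, which doubles the entry at
`(N, N + 1)` and gives `S_{N+1}`. Working with the quotient rather than with the symmetric vectors
avoids any division by two.
-/

section Charpoly

variable {m n o R : Type*} [Fintype m] [DecidableEq m] [Fintype n] [DecidableEq n]
  [Fintype o] [DecidableEq o] [CommRing R]

/-- The Riccati equation `h` says that conjugation by the unipotent matrix with upper right block
`X` makes the matrix block lower triangular. -/
theorem charpoly_fromBlocks_of_riccati {A : Matrix m m R} {B X : Matrix m n R} {C : Matrix n m R}
    {D : Matrix n n R} (h : B + X * D = (A + X * C) * X) :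
    (fromBlocks A B C D).charpoly = (A + X * C).charpoly * (D - C * X).charpoly := by
  have unipotent_mul_inv :
      (fromBlocks 1 (-X) 0 1 * fromBlocks 1 X 0 1 : Matrix (m ⊕ n) (m ⊕ n) R) = 1 := by
    simp [fromBlocks_multiply]
  have intertwines : fromBlocks 1 X 0 1 * fromBlocks A B C D =
      fromBlocks (A + X * C) 0 C (D - C * X) * fromBlocks 1 X 0 1 := by
    simp [fromBlocks_multiply, h]
  calc (fromBlocks A B C D).charpoly
      = (fromBlocks 1 (-X) 0 1 * (fromBlocks 1 X 0 1 * fromBlocks A B C D)).charpoly := by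
        rw [← Matrix.mul_assoc, unipotent_mul_inv, Matrix.one_mul]
    _ = (fromBlocks (A + X * C) 0 C (D - C * X)).charpoly := by
        rw [intertwines, charpoly_mul_comm, Matrix.mul_assoc, mul_eq_one_comm.1 unipotent_mul_inv,
          Matrix.mul_one]
    _ = (A + X * C).charpoly * (D - C * X).charpoly := charpoly_fromBlocks_zero₁₂ ..

theorem charpoly_fromBlocks_swap_invariant (P Q : Matrix n n R) (u : Matrix n o R)
    (v : Matrix o n R) (W : Matrix o o R) :
    (fromBlocks (fromBlocks P u v W) (fromRows Q v) (fromCols Q u) P).charpoly =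
      (P - Q).charpoly * (fromBlocks (P + Q) (2 • u) v W).charpoly := by
  let E : Matrix (n ⊕ o) n R := fromRows 1 0
  have quotient_part : fromBlocks P u v W + E * fromCols Q u = fromBlocks (P + Q) (2 • u) v W := by
    simp [E, fromBlocks_add, two_smul]
  have antisymmetric_part : P - fromCols Q u * E = P - Q := by
    simp [E, fromCols_mul_fromRows]
  have riccati : fromRows Q v + E * P = (fromBlocks P u v W + E * fromCols Q u) * E := by
    rw [quotient_part]
    ext (i | i) j <;> simp [E, fromBlocks_mul_fromRows, fromRows_mul, add_comm]
  rw [charpoly_fromBlocks_of_riccati riccati, quotient_part, antisymmetric_part, mul_comm]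

/-- The maps `f` and `g` enumerate representatives of the two-element orbits of `σ` and the fixed
points of `σ`. -/
theorem charpoly_eq_mul_of_submatrix_involutive_eq {A : Matrix m m R} {σ : m → m}
    {f : n → m} {g : o → m}
    (hσ : Function.Involutive σ) (hA : A.submatrix σ σ = A) (hg : ∀ i, σ (g i) = g i)
    (hfg : Function.Bijective (Sum.elim (Sum.elim f g) (σ ∘ f))) :
    A.charpoly = (A.submatrix f f - A.submatrix f (σ ∘ f)).charpoly *
      (fromBlocks (A.submatrix f f + A.submatrix f (σ ∘ f)) (2 • A.submatrix f g)
        (A.submatrix g f) (A.submatrix g g)).charpoly := by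
  have apply_apply (i j) : A (σ i) (σ j) = A i j := congr_fun₂ hA i j
  have apply_left (i j) : A (σ i) j = A i (σ j) := by rw [← apply_apply, hσ]
  rw [← charpoly_fromBlocks_swap_invariant,
    ← charpoly_reindex (Equiv.ofBijective _ hfg).symm A]
  congr 1
  ext ((i | i) | i) ((j | j) | j) <;> simp [apply_left, hσ _, hg, ← apply_left (g _)]

end Charpoly

section SylvesterKac

/-- The indices of a matrix of size `2 * n + 1` that lie before the middle one. -/
def lowerIndex (n : ℕ) : Fin n → Fin (2 * n + 1) := Fin.castLE (by omega)

/-- The middle index of a matrix of size `2 * n + 1`, as a family of length one. -/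
def middleIndex (n : ℕ) : Fin 1 → Fin (2 * n + 1) := fun _ ↦ ⟨n, by omega⟩

theorem rev_middleIndex (n : ℕ) (i : Fin 1) : (middleIndex n i).rev = middleIndex n i := by
  ext
  simp only [middleIndex, Fin.val_rev]
  omega

theorem bijective_lowerIndex_middleIndex_rev (n : ℕ) :
    Function.Bijective
      (Sum.elim (Sum.elim (lowerIndex n) (middleIndex n)) (Fin.rev ∘ lowerIndex n)) := by
  rw [Fintype.bijective_iff_injective_and_card]
  constructor
  · rintro ((i | i) | i) ((j | j) | j) h <;>
      simp only [Sum.elim_inl, Sum.elim_inr, Function.comp_apply, lowerIndex, middleIndex,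
        Fin.ext_iff, Fin.val_rev, Fin.val_castLE, Sum.inl.injEq, Sum.inr.injEq, reduceCtorEq]
        at h ⊢ <;>
      omega
  · simp only [Fintype.card_sum, Fintype.card_fin]
    omega

theorem Kmat_submatrix_rev (M : ℕ) : (Kmat M).submatrix Fin.rev Fin.rev = Kmat M := by
  ext k l
  simp only [Kmat, submatrix_apply, of_apply, Fin.val_rev]
  split_ifs <;> first | omega | rfl | (norm_cast; omega)

theorem Kmat_submatrix_lowerIndex (N : ℕ) :
    (Kmat (2 * (N + 1))).submatrix (lowerIndex (N + 1)) (lowerIndex (N + 1)) = Gmat N := by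
  ext k l
  simp only [Kmat, Gmat, submatrix_apply, of_apply, lowerIndex, Fin.val_castLE]
  split_ifs <;> first | rfl | (norm_cast; omega)

theorem Kmat_submatrix_lowerIndex_rev (n : ℕ) :
    (Kmat (2 * n)).submatrix (lowerIndex n) (Fin.rev ∘ lowerIndex n) = 0 := by
  ext k l
  simp only [Kmat, submatrix_apply, of_apply, Function.comp_apply, Fin.val_rev, lowerIndex,
    Fin.val_castLE, Matrix.zero_apply]
  split_ifs <;> first | omega | rfl

theorem fromBlocks_Gmat_Kmat_eq_reindex_Smat (N : ℕ) :
    fromBlocks (Gmat N)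
        (2 • (Kmat (2 * (N + 1))).submatrix (lowerIndex (N + 1)) (middleIndex (N + 1)))
        ((Kmat (2 * (N + 1))).submatrix (middleIndex (N + 1)) (lowerIndex (N + 1)))
        ((Kmat (2 * (N + 1))).submatrix (middleIndex (N + 1)) (middleIndex (N + 1))) =
      reindex finSumFinEquiv.symm finSumFinEquiv.symm (Smat (N + 1)) := by
  ext (k | k) (l | l) <;>
    simp only [fromBlocks_apply₁₁, fromBlocks_apply₁₂, fromBlocks_apply₂₁, fromBlocks_apply₂₂,
      reindex_apply, submatrix_apply, Matrix.smul_apply, Equiv.symm_symm, finSumFinEquiv_apply_left,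
      finSumFinEquiv_apply_right, Fin.val_castAdd, Fin.val_natAdd, Fin.val_eq_zero, Gmat, Kmat,
      Smat, of_apply, lowerIndex, middleIndex, Fin.val_castLE, nsmul_eq_mul, add_tsub_cancel_right]
  · split_ifs <;> first | omega | rfl
  · split_ifs <;> first | omega | simp [*]
  · split_ifs <;> first | omega | rfl | (norm_cast; omega)
  · split_ifs <;> first | omega | rfl

end SylvesterKac

theorem stmt_13 (N : ℕ) :
    (Kmat (2 * N + 2)).charpoly = (Gmat N).charpoly * (Smat (N + 1)).charpoly := by
  have folded := charpoly_eq_mul_of_submatrix_involutive_eq Fin.rev_involutive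
    (Kmat_submatrix_rev (2 * (N + 1))) (rev_middleIndex (N + 1))
    (bijective_lowerIndex_middleIndex_rev (N + 1))
  rwa [Kmat_submatrix_lowerIndex, Kmat_submatrix_lowerIndex_rev, sub_zero, add_zero,
    fromBlocks_Gmat_Kmat_eq_reindex_Smat, charpoly_reindex] at folded
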